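/- Fix real α, β > −1, j ∈ ℕ with j ≥ 1, γ ∈ ℝ, M > 0, and a sequence M_n ≥ 0 with lim_{n→∞} M_n n^γ = M. If γ < 2(α+2j+1), then there exists N such that for all n ≥ N the largest real zero y_{n,1} of Q_n satisfies y_{n,1} > 1. -/

import Mathlib

open Polynomial Filter

/-- The Jacobi polynomial `P_n^{(α,β)}` as a real polynomial. -/
noncomputable def jacobiP (α β : ℝ) (n : ℕ) : Polynomial ℝ :=
  ∑ k ∈ Finset.range (n + 1),
    Polynomial.C (Real.Gamma (n + α + 1) / (Real.Gamma ((n : ℝ) - k + 1) * Real.Gamma (α + k + 1)) *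
        (Real.Gamma (n + β + 1) / (Real.Gamma ((k : ℝ) + 1) * Real.Gamma ((n : ℝ) - k + β + 1)))) *
      (Polynomial.C (2⁻¹ : ℝ) * (Polynomial.X - 1)) ^ k *
      (Polynomial.C (2⁻¹ : ℝ) * (Polynomial.X + 1)) ^ (n - k)

/-- The squared Jacobi norm `‖P_n^{(α,β)}‖²`. -/
noncomputable def jacobiNormSq (α β : ℝ) (n : ℕ) : ℝ :=
  ∫ x in (-1 : ℝ)..1, (jacobiP α β n).eval x ^ 2 * (1 - x) ^ α * (1 + x) ^ β

/-- The kernel `K_n^{(j,k)}(x,y)`. -/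
noncomputable def kernK (α β : ℝ) (j k n : ℕ) (x y : ℝ) : ℝ :=
  ∑ i ∈ Finset.range (n + 1),
    (Polynomial.derivative^[j] (jacobiP α β i)).eval x *
      (Polynomial.derivative^[k] (jacobiP α β i)).eval y / jacobiNormSq α β i

/-- The kernel `K_n^{(j,0)}(1,·)` as a polynomial. -/
noncomputable def kernKPoly (α β : ℝ) (j n : ℕ) : Polynomial ℝ :=
  ∑ i ∈ Finset.range (n + 1),
    Polynomial.C ((Polynomial.derivative^[j] (jacobiP α β i)).eval 1 / jacobiNormSq α β i) *
      jacobiP α β i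

/-- The varying Sobolev inner product `(f,g)_{S,n}` with mass `m`. -/
noncomputable def sobInner (α β : ℝ) (j : ℕ) (m : ℝ) (f g : Polynomial ℝ) : ℝ :=
  (∫ x in (-1 : ℝ)..1, f.eval x * g.eval x * (1 - x) ^ α * (1 + x) ^ β) +
    m * (Polynomial.derivative^[j] f).eval 1 * (Polynomial.derivative^[j] g).eval 1

/-- The Jacobi–Sobolev orthogonal polynomial `Q_n`. -/
noncomputable def sobQ (α β : ℝ) (j : ℕ) (Ms : ℕ → ℝ) (n : ℕ) : Polynomial ℝ :=
  jacobiP α β n -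
    Polynomial.C (Ms n * (Polynomial.derivative^[j] (jacobiP α β n)).eval 1 /
        (1 + Ms n * kernK α β j j (n - 1) 1 1)) *
      kernKPoly α β j (n - 1)


lemma beta01 (a b : ℝ) (ha : 0 < a) (hb : 0 < b) :
    IntervalIntegrable (fun x : ℝ => x ^ (a - 1) * (1 - x) ^ (b - 1)) MeasureTheory.volume 0 1 ∧
    ∫ x in (0:ℝ)..1, x ^ (a - 1) * (1 - x) ^ (b - 1) =
      Real.Gamma a * Real.Gamma b / Real.Gamma (a + b) := by
  have hc := Complex.betaIntegral_convergent (u := a) (v := b) (by simpa) (by simpa)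
  have he : ∀ x ∈ Set.uIcc (0:ℝ) 1, (x : ℂ) ^ ((a:ℂ) - 1) * (1 - (x : ℂ)) ^ ((b:ℂ) - 1) =
      ((x ^ (a - 1) * (1 - x) ^ (b - 1) : ℝ) : ℂ) := by
    intro x hx
    rw [Set.uIcc_of_le zero_le_one] at hx
    rw [Complex.ofReal_mul, Complex.ofReal_cpow hx.1, Complex.ofReal_cpow (by linarith [hx.2])]
    push_cast; rfl
  constructor
  · have h2 : IntervalIntegrable (fun x : ℝ => ((x ^ (a - 1) * (1 - x) ^ (b - 1) : ℝ) : ℂ))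
        MeasureTheory.volume 0 1 := by
      refine hc.congr ?_
      intro x hx
      exact he x (Set.uIoc_subset_uIcc hx)
    have h3 : IntervalIntegrable (fun x : ℝ => ((x ^ (a - 1) * (1 - x) ^ (b - 1) : ℝ) : ℂ).re)
        MeasureTheory.volume 0 1 := ⟨h2.1.re, h2.2.re⟩
    simpa only [Complex.ofReal_re] using h3
  · have h1 := ProbabilityTheory.beta_eq_betaIntegralReal a b ha hb
    rw [ProbabilityTheory.beta] at h1
    rw [h1, Complex.betaIntegral, intervalIntegral.integral_congr he,
      intervalIntegral.integral_ofReal, Complex.ofReal_re]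

lemma wt_integrable (a b : ℝ) (ha : -1 < a) (hb : -1 < b) :
    IntervalIntegrable (fun x : ℝ => (1 - x) ^ a * (1 + x) ^ b) MeasureTheory.volume (-1) 1 := by
  have h := (beta01 (b + 1) (a + 1) (by linarith) (by linarith)).1
  have h2 := h.comp_mul_left (c := 1/2)
  have h3 := h2.comp_add_right 1
  norm_num at h3
  have h4 := h3.const_mul ((2:ℝ) ^ (a + b))
  refine h4.congr ?_
  intro x hx
  rw [Set.uIoc_of_le (by norm_num)] at hx
  have e1 : (1 - 1 / 2 * (x + 1)) = (1 - x) / 2 := by ring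
  have e2 : (1 / 2 * (x + 1)) = (1 + x) / 2 := by ring
  simp only []
  rw [e1, e2, Real.div_rpow (by linarith [hx.1, hx.2]) (by norm_num),
    Real.div_rpow (by linarith [hx.1, hx.2]) (by norm_num), Real.rpow_add (by norm_num)]
  have := Real.rpow_pos_of_pos (show (0:ℝ) < 2 by norm_num) a
  have := Real.rpow_pos_of_pos (show (0:ℝ) < 2 by norm_num) b
  field_simp

lemma wt_integral (a b : ℝ) (ha : -1 < a) (hb : -1 < b) :
    ∫ x in (-1:ℝ)..1, (1 - x) ^ a * (1 + x) ^ b =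
      2 ^ (a + b + 1) * (Real.Gamma (a + 1) * Real.Gamma (b + 1) / Real.Gamma (a + b + 2)) := by
  have h := (beta01 (b + 1) (a + 1) (by linarith) (by linarith)).2
  have h2 := intervalIntegral.integral_comp_mul_add (a := -1) (b := 1) (c := (1/2:ℝ))
      (fun x : ℝ => x ^ (b + 1 - 1) * (1 - x) ^ (a + 1 - 1)) (by norm_num) (1/2)
  norm_num at h2
  norm_num at h
  rw [h] at h2
  have h3 : ∫ x in (-1:ℝ)..1, (1 - x) ^ a * (1 + x) ^ b = 
     ∫ x in (-1:ℝ)..1, (2:ℝ) ^ (a + b) * ((1 / 2 * x + 1 / 2) ^ b * (1 - (1 / 2 * x + 1 / 2)) ^ a) := by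
    apply intervalIntegral.integral_congr
    intro x hx
    rw [Set.uIcc_of_le (by norm_num)] at hx
    have e1 : (1 - (1 / 2 * x + 1 / 2)) = (1 - x) / 2 := by ring
    have e2 : (1 / 2 * x + 1 / 2) = (1 + x) / 2 := by ring
    simp only []
    rw [e1, e2, Real.div_rpow (by linarith [hx.1, hx.2]) (by norm_num),
      Real.div_rpow (by linarith [hx.1, hx.2]) (by norm_num), Real.rpow_add (by norm_num)]
    have := Real.rpow_pos_of_pos (show (0:ℝ) < 2 by norm_num) a
    have := Real.rpow_pos_of_pos (show (0:ℝ) < 2 by norm_num) b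
    field_simp
  rw [h3, intervalIntegral.integral_const_mul, h2, Real.rpow_add_one (by norm_num)]
  rw [show b + 1 + (a + 1) = a + b + 2 by ring]
  ring

lemma vander (m : ℕ) (x y : ℝ) :
    (descPochhammer ℝ m).eval (x + y) = ∑ k ∈ Finset.range (m + 1),
      (m.choose k : ℝ) * ((descPochhammer ℝ k).eval x * (descPochhammer ℝ (m - k)).eval y) := by
  have h := Ring.descPochhammer_smeval_add m (Commute.all x y)
  rw [Finset.Nat.sum_antidiagonal_eq_sum_range_succ_mk] at h
  have e : ∀ k (z : ℝ), (descPochhammer ℤ k).smeval z = (descPochhammer ℝ k).eval z := by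
    intro k z
    rw [← descPochhammer_map (algebraMap ℤ ℝ), eval_map_algebraMap, aeval_eq_smeval]
  simpa [e] using h

lemma gamma_desc (k : ℕ) (x : ℝ) (h : 0 < x - k + 1) :
    Real.Gamma (x + 1) = (descPochhammer ℝ k).eval x * Real.Gamma (x - k + 1) := by
  induction k with
  | zero => simp
  | succ k ih =>
    push_cast at h ⊢
    rw [ih (by linarith), descPochhammer_succ_right, show x - k + 1 = (x - (k + 1) + 1) + 1 by ring,
      Real.Gamma_add_one h.ne']
    simp
    ring

lemma gamma_asc (k : ℕ) (x : ℝ) (h : 0 < x) :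
    Real.Gamma (x + k) = (ascPochhammer ℝ k).eval x * Real.Gamma x := by
  induction k with
  | zero => simp
  | succ k ih =>
    push_cast 
    rw [← add_assoc, Real.Gamma_add_one (by positivity), ih, ascPochhammer_succ_right]
    simp
    ring

lemma altsum (n m : ℕ) (a : ℝ) (hm : m ≤ n) :
    ∑ k ∈ Finset.range (n + 1), (-1:ℝ) ^ k * n.choose k * (ascPochhammer ℝ m).eval (a + k) =
      if m = n then (-1:ℝ) ^ n * (n.factorial : ℝ) else 0 := by
  set P : ℝ[X] := (ascPochhammer ℝ m).comp (X + C a) with hP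
  have hmon : P.Monic := (monic_ascPochhammer ℝ m).comp_X_add_C a
  have hdeg : P.natDegree = m := by
    rw [hP, natDegree_comp, ascPochhammer_natDegree, natDegree_X_add_C, mul_one]
  have h1 := fwdDiff_iter_eq_sum_shift (1:ℝ) (fun x => P.eval x) n 0
  have h2 : ∑ k ∈ Finset.range (n + 1), (-1:ℝ) ^ k * n.choose k * (ascPochhammer ℝ m).eval (a + k)
     = (-1) ^ n * (fwdDiff (1:ℝ))^[n] (fun x => P.eval x) 0 := by
    rw [h1, Finset.mul_sum]
    refine Finset.sum_congr rfl fun k hk => ?_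
    have hk : k ≤ n := by simpa [Nat.lt_succ_iff] using hk
    obtain ⟨d, rfl⟩ := Nat.exists_eq_add_of_le hk
    simp [hP, add_comm a, pow_add]
    have : ((-1:ℝ) ^ d * (-1)^d) = 1 := by rw [← mul_pow]; simp
    linear_combination (-(-1:ℝ)^k * (k+d).choose k * (ascPochhammer ℝ m).eval (k + a)) * this
  rw [h2]
  split_ifs with hmn
  · subst hmn
    have := P.fwdDiff_iter_degree_eq_factorial
    rw [hdeg, hmon.leadingCoeff] at this
    have h4 := congrFun this 0
    simp only [one_smul] at h4
    rw [show (fun x => P.eval x) = P.eval from rfl, h4]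
    simp
  · have := Polynomial.fwdDiff_iter_eq_zero_of_degree_lt (P := P) (n := n) (by omega)
    rw [show (fun x => P.eval x) = P.eval from rfl, this]
    simp

/-- Coefficients in the definition of the Jacobi polynomial. -/
noncomputable def jc (α β : ℝ) (n k : ℕ) : ℝ :=
  Real.Gamma (n + α + 1) / (Real.Gamma ((n : ℝ) - k + 1) * Real.Gamma (α + k + 1)) *
        (Real.Gamma (n + β + 1) / (Real.Gamma ((k : ℝ) + 1) * Real.Gamma ((n : ℝ) - k + β + 1)))

/-- Taylor coefficients at `1` of the Jacobi polynomial, in the variable `(x-1)/2`. -/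
noncomputable def jA (α β : ℝ) (n m : ℕ) : ℝ :=
  Real.Gamma (n + α + 1) / (n.factorial * Real.Gamma (α + m + 1) * m.factorial) *
    (descPochhammer ℝ m).eval (n : ℝ) * (descPochhammer ℝ m).eval (n + m + α + β)

lemma jc_eq (α β : ℝ) (n k : ℕ) (hk : k ≤ n) :
    jc α β n k = Real.Gamma (n + α + 1) / ((n - k).factorial * Real.Gamma (α + k + 1)) *
        (Real.Gamma (n + β + 1) / (k.factorial * Real.Gamma ((n : ℝ) - k + β + 1))) := by
  rw [jc, Real.Gamma_nat_eq_factorial, ← Nat.cast_sub hk, Real.Gamma_nat_eq_factorial]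

lemma jc_sum (α β : ℝ) (hα : -1 < α) (hβ : -1 < β) (n m : ℕ) (hm : m ≤ n) :
    ∑ k ∈ Finset.range (m + 1), jc α β n k * ((n - k).choose (m - k) : ℝ) = jA α β n m := by
  rw [jA, show (n + m + α + β : ℝ) = (n + β) + (α + m) by ring, vander, Finset.mul_sum]
  refine Finset.sum_congr rfl fun k hk => ?_
  have hk : k ≤ m := by simpa [Nat.lt_succ_iff] using hk
  have hkn : k ≤ n := hk.trans hm
  have hkn' : (k:ℝ) ≤ n := by exact_mod_cast hkn
  rw [jc_eq _ _ _ _ hkn]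
  have g1 := gamma_desc k (n + β) (by linarith)
  have g2 := gamma_desc (m - k) (α + m) (by rw [Nat.cast_sub hk]; linarith [(Nat.cast_nonneg k : (0:ℝ) ≤ k)])
  rw [Nat.cast_sub hk, show α + m - (m - k) + 1 = α + k + 1 by ring] at g2
  rw [show (n:ℝ) - k + β + 1 = n + β - k + 1 by ring, g1, g2]
  have p1 : 0 < Real.Gamma (n + β - k + 1) := Real.Gamma_pos_of_pos (by linarith)
  have p2 : 0 < Real.Gamma (α + k + 1) := Real.Gamma_pos_of_pos (by linarith [(Nat.cast_nonneg k : (0:ℝ) ≤ k)])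
  have p3 : (descPochhammer ℝ (m - k)).eval (α + m) ≠ 0 := by
    intro h0
    rw [h0, zero_mul] at g2
    exact (Real.Gamma_pos_of_pos (by linarith [(Nat.cast_nonneg m : (0:ℝ) ≤ m)])).ne' g2
  have f0 : (descPochhammer ℝ m).eval (n : ℝ) * ((n - m).factorial : ℝ) = n.factorial := by
    rw [descPochhammer_eval_eq_descFactorial]
    exact_mod_cast (mul_comm _ _).trans (Nat.factorial_mul_descFactorial hm)
  have f1 : (m.choose k : ℝ) * k.factorial * (m - k).factorial = m.factorial := by
    exact_mod_cast Nat.choose_mul_factorial_mul_factorial hk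
  have f2 : ((n - k).choose (m - k) : ℝ) * (m - k).factorial * (n - m).factorial = (n - k).factorial := by
    have := Nat.choose_mul_factorial_mul_factorial (show m - k ≤ n - k by omega)
    rw [show n - k - (m - k) = n - m by omega] at this
    exact_mod_cast this
  rw [← f0, ← f1, ← f2]
  have q1 : ((n - m).factorial : ℝ) ≠ 0 := by positivity
  have q2 : ((m - k).factorial : ℝ) ≠ 0 := by positivity
  have q3 : (k.factorial : ℝ) ≠ 0 := by positivity
  have q4 : ((n - k).choose (m - k) : ℝ) ≠ 0 := by
    exact_mod_cast (Nat.choose_pos (by omega)).ne'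
  have q5 : (m.choose k : ℝ) ≠ 0 := by
    exact_mod_cast (Nat.choose_pos hk).ne'
  have q6 : (descPochhammer ℝ m).eval (n : ℝ) ≠ 0 := by
    intro h0
    rw [h0, zero_mul] at f0
    exact (show (n.factorial : ℝ) ≠ 0 by positivity) f0.symm
  field_simp

lemma jac_taylor (α β : ℝ) (hα : -1 < α) (hβ : -1 < β) (n : ℕ) :
    jacobiP α β n = ∑ m ∈ Finset.range (n + 1),
      C (jA α β n m) * (C (2⁻¹ : ℝ) * (X - 1)) ^ m := by
  have h2 : (C (2⁻¹ : ℝ) * (X + 1) : ℝ[X]) = C (2⁻¹ : ℝ) * (X - 1) + 1 := by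
    have : (C (2⁻¹ : ℝ) + C (2⁻¹ : ℝ) : ℝ[X]) = 1 := by
      rw [← C_add]; norm_num
    linear_combination this
  have h1 : jacobiP α β n = ∑ k ∈ Finset.range (n + 1), ∑ i ∈ Finset.range (n + 1 - k),
      C (jc α β n k * ((n - k).choose i : ℝ)) * (C (2⁻¹ : ℝ) * (X - 1)) ^ (k + i) := by
    rw [jacobiP]
    refine Finset.sum_congr rfl fun k hk => ?_
    have hk : k ≤ n := by simpa [Nat.lt_succ_iff] using hk
    rw [h2, add_pow, Finset.mul_sum, show n + 1 - k = n - k + 1 by omega]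
    refine Finset.sum_congr rfl fun i hi => ?_
    rw [← jc, C_mul, pow_add]
    simp
    ring
  rw [h1, ← Finset.sum_range_diag_flip (n + 1)
    (fun k i => C (jc α β n k * ((n - k).choose i : ℝ)) * (C (2⁻¹ : ℝ) * (X - 1)) ^ (k + i))]
  refine Finset.sum_congr rfl fun m hm => ?_
  have hm : m ≤ n := by simpa [Nat.lt_succ_iff] using hm
  rw [← jc_sum α β hα hβ n m hm, map_sum, Finset.sum_mul]
  refine Finset.sum_congr rfl fun k hk => ?_
  have hk : k ≤ m := by simpa [Nat.lt_succ_iff] using hk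
  rw [Nat.add_sub_cancel' hk]

lemma jA_zero (α β : ℝ) (n m : ℕ) (h : n < m) : jA α β n m = 0 := by
  rw [jA, descPochhammer_eval_eq_descFactorial, Nat.descFactorial_of_lt h]
  simp

lemma jac_deriv (α β : ℝ) (hα : -1 < α) (hβ : -1 < β) (n j : ℕ) :
    (derivative^[j] (jacobiP α β n)).eval 1 = j.factorial / 2 ^ j * jA α β n j := by
  have h1 : (derivative^[j] (jacobiP α β n)).eval 1 =
      j.factorial * (taylor 1 (jacobiP α β n)).coeff j := by
    rw [taylor_coeff, ← factorial_smul_hasseDeriv]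
    simp
  have h2 : taylor 1 (jacobiP α β n) = ∑ m ∈ Finset.range (n + 1), C (jA α β n m * 2⁻¹ ^ m) * X ^ m := by
    rw [jac_taylor α β hα hβ, map_sum]
    refine Finset.sum_congr rfl fun m hm => ?_
    rw [taylor_apply, C_mul, C_pow]
    simp only [mul_comp, C_comp, pow_comp, sub_comp, X_comp, one_comp, C_1, add_sub_cancel_right]
    ring
  rw [h1, h2, finsetSum_coeff]
  simp only [coeff_C_mul_X_pow]
  rw [Finset.sum_ite_eq]
  split_ifs with h
  · rw [inv_pow]; field_simp
  · rw [jA_zero α β n j (by simpa using h)]; simp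

lemma jac_coeff (α β : ℝ) (hα : -1 < α) (hβ : -1 < β) (n : ℕ) :
    (jacobiP α β n).natDegree ≤ n ∧ (jacobiP α β n).coeff n = jA α β n n / 2 ^ n := by
  have hd : ∀ m, ((C (2⁻¹ : ℝ) * (X - 1)) ^ m : ℝ[X]).natDegree ≤ m := by
    intro m
    refine (natDegree_pow_le_of_le (m := 1) m ?_).trans (by simp)
    exact (natDegree_C_mul_le _ _).trans (by simpa using natDegree_X_sub_C_le (1:ℝ))
  constructor
  · rw [jac_taylor α β hα hβ]
    refine natDegree_sum_le_of_forall_le _ _ fun m hm => ?_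
    have hm : m ≤ n := by simpa [Nat.lt_succ_iff] using hm
    exact (natDegree_C_mul_le _ _).trans ((hd m).trans hm)
  · rw [jac_taylor α β hα hβ, finsetSum_coeff, Finset.sum_range_succ, Finset.sum_eq_zero, zero_add,
      coeff_C_mul, mul_pow, ← C_pow, coeff_C_mul]
    · have := (monic_X_sub_C (1:ℝ)).pow n
      have hdeg : ((X - C (1:ℝ)) ^ n).natDegree = n := by
        rw [natDegree_pow, natDegree_X_sub_C, mul_one]
      have h2 : ((X - C (1:ℝ)) ^ n).coeff n = 1 := by
        have h3 := this.coeff_natDegree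
        rwa [hdeg] at h3
      rw [C_1] at h2
      rw [h2, inv_pow]; field_simp
    · intro m hm
      have hm : m < n := by simpa using hm
      rw [coeff_C_mul, coeff_eq_zero_of_natDegree_lt (lt_of_le_of_lt (hd m) hm), mul_zero]

lemma jac_eval (α β : ℝ) (n : ℕ) (x : ℝ) : (jacobiP α β n).eval x =
    ∑ k ∈ Finset.range (n + 1), jc α β n k * (2⁻¹ * (x - 1)) ^ k * (2⁻¹ * (x + 1)) ^ (n - k) := by
  rw [jacobiP, eval_finsetSum]
  refine Finset.sum_congr rfl fun k hk => ?_
  rw [← jc]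
  simp

lemma jac_int (α β : ℝ) (hα : -1 < α) (hβ : -1 < β) (n m : ℕ) (hm : m ≤ n) :
    ∫ x in (-1:ℝ)..1, (jacobiP α β n).eval x * (1 - x) ^ m * ((1 - x) ^ α * (1 + x) ^ β) =
      if m = n then (-1:ℝ) ^ n * (2 ^ (α + β + n + 1) * (Real.Gamma (n + α + 1) * Real.Gamma (n + β + 1) /
        Real.Gamma (2 * n + α + β + 2))) else 0 := by
  have h1 : ∫ x in (-1:ℝ)..1, (jacobiP α β n).eval x * (1 - x) ^ m * ((1 - x) ^ α * (1 + x) ^ β) =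
      ∫ x in (-1:ℝ)..1, ∑ k ∈ Finset.range (n + 1), (jc α β n k * (-1) ^ k * 2⁻¹ ^ n) *
        ((1 - x) ^ (α + m + k) * (1 + x) ^ (β + (n - k : ℕ))) := by
    refine intervalIntegral.integral_congr_Ioo_of_le (by norm_num) fun x hx => ?_
    rw [jac_eval, Finset.sum_mul, Finset.sum_mul]
    refine Finset.sum_congr rfl fun k hk => ?_
    have hk : k ≤ n := by simpa [Nat.lt_succ_iff] using hk
    have p1 : 0 < 1 - x := by linarith [hx.2]
    have p2 : 0 < 1 + x := by linarith [hx.1]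
    rw [Real.rpow_add_natCast p1.ne', Real.rpow_add_natCast p1.ne', Real.rpow_add_natCast p2.ne']
    obtain ⟨d, rfl⟩ := Nat.exists_eq_add_of_le hk
    rw [show (2⁻¹ * (x - 1)) = (-1) * 2⁻¹ * (1 - x) by ring, mul_pow, mul_pow, mul_pow, pow_add, Nat.add_sub_cancel_left]
    ring
  rw [h1, intervalIntegral.integral_finsetSum]
  · set G : ℝ := 2 ^ (α + β + m + 1) * (Real.Gamma (n + α + 1) * Real.Gamma (n + β + 1) /
        (n.factorial * Real.Gamma (n + m + α + β + 2))) with hG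
    have h2 : ∀ k ∈ Finset.range (n + 1), ∫ x in (-1:ℝ)..1, (jc α β n k * (-1) ^ k * 2⁻¹ ^ n) *
        ((1 - x) ^ (α + m + k) * (1 + x) ^ (β + (n - k : ℕ))) = 
          G * ((-1:ℝ) ^ k * n.choose k * (ascPochhammer ℝ m).eval (α + 1 + k)) := by
      intro k hk
      have hk : k ≤ n := by simpa [Nat.lt_succ_iff] using hk
      have hk' : (k:ℝ) ≤ n := by exact_mod_cast hk
      have hk0 : (0:ℝ) ≤ k := Nat.cast_nonneg k
      have hm0 : (0:ℝ) ≤ m := Nat.cast_nonneg m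
      rw [intervalIntegral.integral_const_mul, Nat.cast_sub hk, wt_integral _ _ (by linarith) (by linarith),
        jc_eq _ _ _ _ hk, hG]
      have g := gamma_asc m (α + 1 + k) (by linarith)
      rw [show α + m + k + 1 = α + 1 + k + m by ring, g,
        show α + m + k + (β + (n - k)) + 1 = (α + β + m + 1) + n by ring,
        Real.rpow_add_natCast (by norm_num), 
        show α + m + k + (β + (n - k)) + 2 = n + m + α + β + 2 by ring,
        show β + ((n:ℝ) - k) + 1 = n - k + β + 1 by ring,
        show α + k + 1 = α + 1 + k by ring]
      have f1 : (n.choose k : ℝ) * k.factorial * (n - k).factorial = n.factorial := by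
        exact_mod_cast Nat.choose_mul_factorial_mul_factorial hk
      rw [← f1]
      have p1 : 0 < Real.Gamma (n - k + β + 1) := Real.Gamma_pos_of_pos (by linarith)
      have p2 : 0 < Real.Gamma (α + 1 + k) := Real.Gamma_pos_of_pos (by linarith)
      have p3 : 0 < Real.Gamma (n + m + α + β + 2) := Real.Gamma_pos_of_pos (by linarith)
      have q5 : (n.choose k : ℝ) ≠ 0 := by
        exact_mod_cast (Nat.choose_pos hk).ne'
      have q2 : ((n - k).factorial : ℝ) ≠ 0 := by positivity
      have q3 : (k.factorial : ℝ) ≠ 0 := by positivity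
      rw [inv_pow]
      field_simp
    rw [Finset.sum_congr rfl h2, ← Finset.mul_sum, altsum n m _ hm]
    split_ifs with hmn
    · subst hmn
      rw [hG, show (m + m + α + β + 2 : ℝ) = 2 * m + α + β + 2 by ring]
      have q3 : (m.factorial : ℝ) ≠ 0 := by positivity
      field_simp
    · simp
  · intro k hk
    have hk0 : (0:ℝ) ≤ k := Nat.cast_nonneg k
    have hm0 : (0:ℝ) ≤ m := Nat.cast_nonneg m
    have hnk : (0:ℝ) ≤ (n - k : ℕ) := Nat.cast_nonneg _
    exact (wt_integrable _ _ (by linarith) (by linarith)).const_mul _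

lemma jac_norm (α β : ℝ) (hα : -1 < α) (hβ : -1 < β) (n : ℕ) :
    jacobiNormSq α β n = jA α β n n * (2 ^ (α + β + 1) *
      (Real.Gamma (n + α + 1) * Real.Gamma (n + β + 1) / Real.Gamma (2 * n + α + β + 2))) := by
  have h1 : jacobiNormSq α β n = ∫ x in (-1:ℝ)..1, ∑ m ∈ Finset.range (n + 1),
      (jA α β n m * (-2⁻¹) ^ m) *
       ((jacobiP α β n).eval x * (1 - x) ^ m * ((1 - x) ^ α * (1 + x) ^ β)) := by
    rw [jacobiNormSq]
    refine intervalIntegral.integral_congr fun x hx => ?_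
    have h2 : (jacobiP α β n).eval x =
        ∑ m ∈ Finset.range (n + 1), (jA α β n m * (-2⁻¹) ^ m) * (1 - x) ^ m := by
      rw [jac_taylor α β hα hβ, eval_finsetSum]
      refine Finset.sum_congr rfl fun m hm => ?_
      simp only [eval_mul, eval_C, eval_pow, eval_sub, eval_X, eval_one]
      rw [show (2⁻¹ * (x - 1)) = -2⁻¹ * (1 - x) by ring, mul_pow]
      ring
    rw [pow_two]
    nth_rewrite 2 [h2]
    rw [Finset.mul_sum, Finset.sum_mul, Finset.sum_mul]
    refine Finset.sum_congr rfl fun m hm => ?_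
    ring
  rw [h1, intervalIntegral.integral_finsetSum, Finset.sum_range_succ, Finset.sum_eq_zero, zero_add,
    intervalIntegral.integral_const_mul, jac_int α β hα hβ n n le_rfl, if_pos rfl,
    show α + β + n + 1 = α + β + 1 + n by ring, Real.rpow_add_natCast (by norm_num)]
  · have : ((-2⁻¹:ℝ)) ^ n * (-1) ^ n * 2 ^ n = 1 := by
      rw [← mul_pow, ← mul_pow]; norm_num
    linear_combination (jA α β n n * (2 ^ (α + β + 1) *
      (Real.Gamma (n + α + 1) * Real.Gamma (n + β + 1) / Real.Gamma (2 * n + α + β + 2)))) * this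
  · intro m hm
    have hm : m < n := by simpa using hm
    rw [intervalIntegral.integral_const_mul, jac_int α β hα hβ n m hm.le, if_neg hm.ne, mul_zero]
  · intro m hm
    refine IntervalIntegrable.const_mul ?_ _
    refine (wt_integrable α β hα hβ).continuousOn_mul ?_
    exact ((jacobiP α β n).continuous.mul (by fun_prop)).continuousOn

lemma gamma_lim_pos (b : ℝ) (hb : 0 < b) :
    Tendsto (fun n : ℕ => Real.Gamma (n + b + 1) / (n.factorial * (n:ℝ) ^ b)) atTop (nhds 1) := by
  have hG := Real.Gamma_pos_of_pos hb
  have h1 := (tendsto_const_nhds (x := Real.Gamma b)).div (Real.GammaSeq_tendsto_Gamma b) hG.ne'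
  rw [div_self hG.ne'] at h1
  refine h1.congr' ?_
  filter_upwards [eventually_ge_atTop 1] with n hn
  have hn0 : (0:ℝ) < n := by exact_mod_cast hn
  have h2 : ∀ n : ℕ, Real.Gamma (n + b) = (∏ j ∈ Finset.range n, (b + j)) * Real.Gamma b := by
    intro n
    induction n with
    | zero => simp
    | succ n ih =>
      rw [Finset.prod_range_succ, show ((n + 1 : ℕ) : ℝ) + b = (n + b) + 1 by push_cast; ring,
        Real.Gamma_add_one (by positivity), ih]
      ring
  have h3 := h2 (n + 1)
  rw [show (n:ℝ) + b + 1 = ((n + 1 : ℕ) : ℝ) + b by push_cast; ring, h3]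
  have p1 : 0 < ∏ j ∈ Finset.range (n + 1), (b + j) := Finset.prod_pos fun i _ => by positivity
  have p2 := Real.rpow_pos_of_pos hn0 b
  have p3 : (n.factorial : ℝ) ≠ 0 := by positivity
  simp only [Pi.div_apply, Real.GammaSeq]
  field_simp

lemma gamma_lim_step (b : ℝ) 
    (h : Tendsto (fun n : ℕ => Real.Gamma (n + (b + 1) + 1) / (n.factorial * (n:ℝ) ^ (b + 1))) atTop (nhds 1)) :
    Tendsto (fun n : ℕ => Real.Gamma (n + b + 1) / (n.factorial * (n:ℝ) ^ b)) atTop (nhds 1) := by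
  have h2 : Tendsto (fun n : ℕ => (n:ℝ) / (n + (b + 1))) atTop (nhds 1) :=
    tendsto_natCast_div_add_atTop (b + 1)
  have h3 := h.mul h2
  rw [one_mul] at h3
  refine h3.congr' ?_
  filter_upwards [eventually_ge_atTop 1, 
    (tendsto_natCast_atTop_atTop (R := ℝ)).eventually_gt_atTop (-(b+1))] with n hn hn2
  have hn0 : (0:ℝ) < n := by exact_mod_cast hn
  have p2 := Real.rpow_pos_of_pos hn0 b
  have p3 : (n.factorial : ℝ) ≠ 0 := by positivity
  have p4 : (n:ℝ) + (b + 1) ≠ 0 := by linarith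
  rw [Real.Gamma_add_one p4, Real.rpow_add_one hn0.ne', ← add_assoc]
  rw [← add_assoc] at p4
  field_simp

lemma gamma_lim (b : ℝ) (hb : -2 < b) :
    Tendsto (fun n : ℕ => Real.Gamma (n + b + 1) / (n.factorial * (n:ℝ) ^ b)) atTop (nhds 1) :=
  gamma_lim_step b (gamma_lim_step (b + 1) (gamma_lim_pos (b + 1 + 1) (by linarith)))

lemma desc_lim (j : ℕ) (c : ℝ) :
    Tendsto (fun n : ℕ => (descPochhammer ℝ j).eval (n + c) / (n:ℝ) ^ j) atTop (nhds 1) := by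
  have h : Tendsto (fun n : ℕ => ∏ l ∈ Finset.range j, ((n + c - l) / (n:ℝ))) atTop
      (nhds (∏ l ∈ Finset.range j, (1:ℝ))) := by
    refine tendsto_finsetProd _ fun l _ => ?_
    have h1 : Tendsto (fun n : ℕ => 1 + (c - l) / (n:ℝ)) atTop (nhds (1 + 0)) :=
      tendsto_const_nhds.add (tendsto_const_div_atTop_nhds_zero_nat _)
    rw [add_zero] at h1
    refine h1.congr' ?_
    filter_upwards [eventually_ge_atTop 1] with n hn
    have hn0 : (0:ℝ) < n := by exact_mod_cast hn
    field_simp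
    ring
  simp only [Finset.prod_const_one] at h
  refine h.congr fun n => ?_
  rw [descPochhammer_eval_eq_prod_range, Finset.prod_div_distrib]
  simp

/-- The main varying factor of the `j`-th derivative at `1`. -/
noncomputable def jR (α β : ℝ) (j n : ℕ) : ℝ :=
  (descPochhammer ℝ j).eval (n : ℝ) * (descPochhammer ℝ j).eval (n + j + α + β)

lemma jac_norm' (α β : ℝ) (hα : -1 < α) (hβ : -1 < β) (n : ℕ) (hn : 1 ≤ n) :
    jacobiNormSq α β n = 2 ^ (α + β + 1) * Real.Gamma (n + α + 1) * Real.Gamma (n + β + 1) /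
      (n.factorial * Real.Gamma (n + (α + β) + 1) * (2 * n + α + β + 1)) := by
  have hn0 : (1:ℝ) ≤ n := by exact_mod_cast hn
  rw [jac_norm α β hα hβ, jA]
  have g := gamma_desc n (n + n + α + β) (by linarith)
  rw [show (n + n + α + β - n + 1 : ℝ) = n + (α + β) + 1 by ring,
    show (n + n + α + β : ℝ) = 2 * n + α + β by ring] at g
  rw [show (2 * n + α + β + 2 : ℝ) = (2 * n + α + β + 1) + 1 by ring, Real.Gamma_add_one (s := 2 * n + α + β + 1) (by linarith), g,
    show (n + n + α + β : ℝ) = 2 * n + α + β by ring, descPochhammer_eval_eq_descFactorial,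
    Nat.descFactorial_self, show α + n + 1 = n + α + 1 by ring]
  have p1 : 0 < Real.Gamma (n + α + 1) := Real.Gamma_pos_of_pos (by linarith)
  have p2 : 0 < Real.Gamma (n + (α + β) + 1) := Real.Gamma_pos_of_pos (by linarith)
  have p3 : 0 < 2 * n + α + β + 1 := by linarith
  have p5 : (n.factorial : ℝ) ≠ 0 := by positivity
  have p4 : (descPochhammer ℝ n).eval (2 * n + α + β) ≠ 0 := by
    intro h0
    rw [h0, zero_mul] at g
    exact (Real.Gamma_pos_of_pos p3).ne' g
  generalize (descPochhammer ℝ n).eval (2 * n + α + β) = D at p4 ⊢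
  field_simp

/-- The value at one. -/
noncomputable def jp (α : ℝ) (n : ℕ) : ℝ := Real.Gamma (n + α + 1) / (n.factorial * Real.Gamma (α + 1))

/-- The constant factor of the `j`-th derivative at `1`. -/
noncomputable def jkap (α : ℝ) (j : ℕ) : ℝ := Real.Gamma (α + 1) / (Real.Gamma (α + j + 1) * 2 ^ j)

lemma jp_pos (α : ℝ) (hα : -1 < α) (n : ℕ) : 0 < jp α n := by
  have hn0 : (0:ℝ) ≤ n := Nat.cast_nonneg n
  have p1 : 0 < Real.Gamma (n + α + 1) := Real.Gamma_pos_of_pos (by linarith)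
  have p2 : 0 < Real.Gamma (α + 1) := Real.Gamma_pos_of_pos (by linarith)
  rw [jp]; positivity

lemma jkap_pos (α : ℝ) (hα : -1 < α) (n : ℕ) : 0 < jkap α n := by
  have hn0 : (0:ℝ) ≤ n := Nat.cast_nonneg n
  have p1 : 0 < Real.Gamma (α + n + 1) := Real.Gamma_pos_of_pos (by linarith)
  have p2 : 0 < Real.Gamma (α + 1) := Real.Gamma_pos_of_pos (by linarith)
  rw [jkap]; positivity

lemma jac_deriv' (α β : ℝ) (hα : -1 < α) (hβ : -1 < β) (n j : ℕ) :
    (derivative^[j] (jacobiP α β n)).eval 1 = jp α n * (jkap α j * jR α β j n) := by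
  rw [jac_deriv α β hα hβ, jA, jp, jkap, jR]
  have hj0 : (0:ℝ) ≤ j := Nat.cast_nonneg j
  have p1 : 0 < Real.Gamma (α + j + 1) := Real.Gamma_pos_of_pos (by linarith)
  have p2 : 0 < Real.Gamma (α + 1) := Real.Gamma_pos_of_pos (by linarith)
  have p5 : (n.factorial : ℝ) ≠ 0 := by positivity
  have p6 : (j.factorial : ℝ) ≠ 0 := by positivity
  field_simp

lemma jac_one (α β : ℝ) (hα : -1 < α) (hβ : -1 < β) (n : ℕ) :
    (jacobiP α β n).eval 1 = jp α n := by
  have := jac_deriv' α β hα hβ n 0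
  have p2 : 0 < Real.Gamma (α + 1) := Real.Gamma_pos_of_pos (by linarith)
  simpa [jkap, jR, p2.ne'] using this

lemma jnorm_nonneg (α β : ℝ) (n : ℕ) : 0 ≤ jacobiNormSq α β n := by
  rw [jacobiNormSq]
  refine intervalIntegral.integral_nonneg (by norm_num) fun x hx => ?_
  have := Real.rpow_nonneg (show 0 ≤ 1 - x by linarith [hx.2]) α
  have := Real.rpow_nonneg (show 0 ≤ 1 + x by linarith [hx.1]) β
  positivity

lemma desc2_pos (α β : ℝ) (hα : -1 < α) (hβ : -1 < β) (j i n : ℕ) (hi : 1 ≤ i) (hn : i ≤ n) :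
    0 < (descPochhammer ℝ j).eval (i + j + α + β) ∧
    (descPochhammer ℝ j).eval (i + j + α + β) ≤ (descPochhammer ℝ j).eval (n + j + α + β) := by
  have hi0 : (1:ℝ) ≤ i := by exact_mod_cast hi
  have hn0 : (i:ℝ) ≤ n := by exact_mod_cast hn
  have key : ∀ l ∈ Finset.range j, 0 < i + j + α + β - l := by
    intro l hl
    have : l + 1 ≤ j := by simpa [Nat.succ_le_iff] using hl
    have : (l:ℝ) + 1 ≤ j := by exact_mod_cast this
    linarith
  rw [descPochhammer_eval_eq_prod_range, descPochhammer_eval_eq_prod_range]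
  exact ⟨Finset.prod_pos key, Finset.prod_le_prod (fun l hl => (key l hl).le) fun l hl => by linarith⟩

lemma jR_nonneg (α β : ℝ) (hα : -1 < α) (hβ : -1 < β) (j i : ℕ) (hj : 1 ≤ j) : 0 ≤ jR α β j i := by
  rw [jR, descPochhammer_eval_eq_descFactorial]
  rcases Nat.eq_zero_or_pos i with rfl | hi
  · rw [Nat.descFactorial_of_lt hj]; simp
  · have := (desc2_pos α β hα hβ j i i hi le_rfl).1
    positivity

lemma jR_mono (α β : ℝ) (hα : -1 < α) (hβ : -1 < β) (j i n : ℕ) (hj : 1 ≤ j) (h : i ≤ n) :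
    jR α β j i ≤ jR α β j n := by
  rcases Nat.eq_zero_or_pos i with rfl | hi
  · have : jR α β j 0 = 0 := by
      rw [jR, descPochhammer_eval_eq_descFactorial, Nat.descFactorial_of_lt hj]; simp
    rw [this]; exact jR_nonneg α β hα hβ j n hj
  · have := desc2_pos α β hα hβ j i n hi h
    rw [jR, jR, descPochhammer_eval_eq_descFactorial, descPochhammer_eval_eq_descFactorial]
    refine mul_le_mul ?_ this.2 this.1.le (by positivity)
    exact_mod_cast Nat.descFactorial_le _ h

lemma jR_two (α β : ℝ) (hα : -1 < α) (hβ : -1 < β) (j i n : ℕ) (hj : 1 ≤ j) (h : 2 * i ≤ n) :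
    2 * jR α β j i ≤ jR α β j n := by
  rcases Nat.eq_zero_or_pos i with rfl | hi
  · have : jR α β j 0 = 0 := by
      rw [jR, descPochhammer_eval_eq_descFactorial, Nat.descFactorial_of_lt hj]; simp
    rw [this, mul_zero]; exact jR_nonneg α β hα hβ j n hj
  · have := desc2_pos α β hα hβ j i n hi (by omega)
    rw [jR, jR, descPochhammer_eval_eq_descFactorial, descPochhammer_eval_eq_descFactorial, ← mul_assoc]
    refine mul_le_mul ?_ this.2 this.1.le (by positivity)
    have : 2 * i.descFactorial j ≤ n.descFactorial j := by
      obtain ⟨k, rfl⟩ := Nat.exists_eq_add_of_le' hj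
      rw [Nat.descFactorial_succ, Nat.descFactorial_succ, ← mul_assoc]
      exact Nat.mul_le_mul (by omega) (Nat.descFactorial_le _ (by omega))
    exact_mod_cast this

lemma u_lim (α β : ℝ) (hα : -1 < α) (hβ : -1 < β) (j : ℕ) :
    ∃ L : ℝ, 0 < L ∧ Tendsto (fun n : ℕ => ((jp α n) ^ 2 * (jR α β j n) ^ 2 / jacobiNormSq α β n) /
      (n:ℝ) ^ (4 * j + 2 * α + 1)) atTop (nhds L) := by
  have pG : 0 < Real.Gamma (α + 1) := Real.Gamma_pos_of_pos (by linarith)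
  have pT : (0:ℝ) < 2 ^ (α + β + 1) := by positivity
  refine ⟨(1 / (Real.Gamma (α + 1) ^ 2 * 2 ^ (α + β + 1))) * ((1 * 1) ^ 2 * 2 * 1 * 1 / 1), by positivity, ?_⟩
  have l1 : Tendsto (fun n : ℕ => (2 * n + α + β + 1) / (n:ℝ)) atTop (nhds 2) := by
    have h1 : Tendsto (fun n : ℕ => 2 + (α + β + 1) / (n:ℝ)) atTop (nhds (2 + 0)) :=
      tendsto_const_nhds.add (tendsto_const_div_atTop_nhds_zero_nat _)
    rw [add_zero] at h1
    refine h1.congr' ?_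
    filter_upwards [eventually_ge_atTop 1] with n hn
    have hn0 : (0:ℝ) < n := by exact_mod_cast hn
    field_simp
    ring
  have l2 := (((((((desc_lim j 0).mul (desc_lim j (j + α + β))).pow 2).mul l1).mul
    (gamma_lim α (by linarith))).mul (gamma_lim (α + β) (by linarith))).div
    (gamma_lim β (by linarith)) one_ne_zero).const_mul (1 / (Real.Gamma (α + 1) ^ 2 * 2 ^ (α + β + 1)))
  refine l2.congr' ?_
  filter_upwards [eventually_ge_atTop 1] with n hn
  simp only [Pi.div_apply]
  have hn0 : (0:ℝ) < n := by exact_mod_cast hn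
  have hn1 : (1:ℝ) ≤ n := by exact_mod_cast hn
  rw [jac_norm' α β hα hβ n hn, jp, jR, show (4 * j + 2 * α + 1 : ℝ) = α + (α + ((4 * j + 1 : ℕ) : ℝ)) by push_cast; ring,
    Real.rpow_add hn0 α (α + ((4 * j + 1 : ℕ) : ℝ)), Real.rpow_add hn0 α ((4 * j + 1 : ℕ) : ℝ), Real.rpow_natCast, Real.rpow_add hn0 α β, add_zero,
    show (n:ℝ) + (j + α + β) = n + j + α + β by ring]
  have p1 : 0 < Real.Gamma (n + α + 1) := Real.Gamma_pos_of_pos (by linarith)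
  have p2 : 0 < Real.Gamma (n + (α + β) + 1) := Real.Gamma_pos_of_pos (by linarith)
  have p4 : 0 < Real.Gamma (n + β + 1) := Real.Gamma_pos_of_pos (by linarith)
  have p3 : 0 < 2 * n + α + β + 1 := by linarith
  have p5 : (n.factorial : ℝ) ≠ 0 := by positivity
  have p6 := Real.rpow_pos_of_pos hn0 α
  have p7 := Real.rpow_pos_of_pos hn0 β
  field_simp
  ring

/-- The decisive sum. -/
noncomputable def jT (α β : ℝ) (j n : ℕ) : ℝ :=
  ∑ i ∈ Finset.range n, (jp α i) ^ 2 * (jkap α j) ^ 2 * jR α β j i * (jR α β j n - jR α β j i) /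
    jacobiNormSq α β i

lemma jT_lower (α β : ℝ) (hα : -1 < α) (hβ : -1 < β) (j : ℕ) (hj : 1 ≤ j) :
    ∃ c : ℝ, 0 < c ∧ ∀ᶠ n : ℕ in atTop, c * (n:ℝ) ^ (2 * (α + 2 * j + 1)) ≤ jT α β j n := by
  obtain ⟨L, hL, hlim⟩ := u_lim α β hα hβ j
  have hk := jkap_pos α hα j
  have hev := hlim.eventually (lt_mem_nhds (show L / 2 < L by linarith))
  obtain ⟨N0, hN0⟩ := eventually_atTop.1 hev
  have hj1 : (1:ℝ) ≤ j := by exact_mod_cast hj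
  set p : ℝ := 4 * j + 2 * α + 1 with hp
  have hp0 : 0 < p := by rw [hp]; linarith
  refine ⟨(1 / 8) * ((jkap α j) ^ 2 * (L / 2) * (1 / 4) ^ p), by positivity, ?_⟩
  filter_upwards [eventually_ge_atTop (4 * N0 + 8)] with n hn
  have hn0 : (0:ℝ) < n := by exact_mod_cast (show 0 < n by omega)
  have hterm : ∀ i ∈ Finset.range n, 0 ≤ (jp α i) ^ 2 * (jkap α j) ^ 2 * jR α β j i *
      (jR α β j n - jR α β j i) / jacobiNormSq α β i := by
    intro i hi
    have h1 := jR_mono α β hα hβ j i n hj (by simpa using (Finset.mem_range.1 hi).le)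
    have h2 := jR_nonneg α β hα hβ j i hj
    have h3 := jnorm_nonneg α β i
    have h4 : 0 ≤ jR α β j n - jR α β j i := by linarith
    positivity
  have hsub : Finset.Ioc (n / 4) (n / 2) ⊆ Finset.range n := by
    intro i hi
    simp only [Finset.mem_Ioc, Finset.mem_range] at hi ⊢
    omega
  have hlow : ∀ i ∈ Finset.Ioc (n / 4) (n / 2), (jkap α j) ^ 2 * (L / 2) * (1 / 4) ^ p * (n:ℝ) ^ p ≤
      (jp α i) ^ 2 * (jkap α j) ^ 2 * jR α β j i *
      (jR α β j n - jR α β j i) / jacobiNormSq α β i := by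
    intro i hi
    simp only [Finset.mem_Ioc] at hi
    have h1 := jR_two α β hα hβ j i n hj (by omega)
    have h2 := jR_nonneg α β hα hβ j i hj
    have h3 := jnorm_nonneg α β i
    have h4 : jR α β j i ≤ jR α β j n - jR α β j i := by linarith
    have h5 := hN0 i (by omega)
    have hi0 : (0:ℝ) < i := by exact_mod_cast (show 0 < i by omega)
    rw [lt_div_iff₀ (by positivity)] at h5
    have h6 : (n:ℝ) ≤ 4 * i := by exact_mod_cast (show n ≤ 4 * i by omega)
    calc (jkap α j) ^ 2 * (L / 2) * (1 / 4) ^ p * (n:ℝ) ^ p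
        = (jkap α j) ^ 2 * (L / 2 * (1 / 4 * (n:ℝ)) ^ p) := by
          rw [Real.mul_rpow (by norm_num) hn0.le]; ring
      _ ≤ (jkap α j) ^ 2 * (L / 2 * (i:ℝ) ^ p) := by
          gcongr
          linarith
      _ ≤ (jkap α j) ^ 2 * (jp α i ^ 2 * jR α β j i ^ 2 / jacobiNormSq α β i) := by
          gcongr
      _ = (jp α i) ^ 2 * (jkap α j) ^ 2 * jR α β j i * jR α β j i / jacobiNormSq α β i := by ring
      _ ≤ _ := by gcongr
  have hcard : (n:ℝ) / 8 ≤ ((Finset.Ioc (n / 4) (n / 2)).card : ℝ) := by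
    rw [Nat.card_Ioc, div_le_iff₀ (by norm_num)]
    exact_mod_cast (show n ≤ (n / 2 - n / 4) * 8 by omega)
  calc _ = (n:ℝ) / 8 * ((jkap α j) ^ 2 * (L / 2) * (1 / 4) ^ p * (n:ℝ) ^ p) := by
        rw [show 2 * (α + 2 * j + 1) = p + 1 by rw [hp]; ring, Real.rpow_add_one hn0.ne']
        ring
    _ ≤ ((Finset.Ioc (n / 4) (n / 2)).card : ℝ) * ((jkap α j) ^ 2 * (L / 2) * (1 / 4) ^ p * (n:ℝ) ^ p) := by
        gcongr
    _ ≤ ∑ i ∈ Finset.Ioc (n / 4) (n / 2), (jp α i) ^ 2 * (jkap α j) ^ 2 * jR α β j i *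
      (jR α β j n - jR α β j i) / jacobiNormSq α β i := by
        rw [← nsmul_eq_mul]
        exact Finset.card_nsmul_le_sum _ _ _ hlow
    _ ≤ jT α β j n := Finset.sum_le_sum_of_subset_of_nonneg hsub fun i hi _ => hterm i hi

lemma sobQ_one_neg (α β : ℝ) (hα : -1 < α) (hβ : -1 < β) (j : ℕ) 
    (Ms : ℕ → ℝ) (n : ℕ) (hn : 1 ≤ n) (hM : 0 ≤ Ms n) (h : 1 < Ms n * jT α β j n) :
    (sobQ α β j Ms n).eval 1 < 0 := by
  set K0 := ∑ i ∈ Finset.range n, (jp α i) ^ 2 * jkap α j * jR α β j i / jacobiNormSq α β i with hK0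
  set K1 := ∑ i ∈ Finset.range n, (jp α i) ^ 2 * jkap α j ^ 2 * jR α β j i ^ 2 / jacobiNormSq α β i with hK1
  have e0 : (kernKPoly α β j (n - 1)).eval 1 = K0 := by
    rw [kernKPoly, Nat.sub_add_cancel hn, eval_finsetSum]
    refine Finset.sum_congr rfl fun i _ => ?_
    rw [eval_mul, eval_C, jac_deriv' α β hα hβ, jac_one α β hα hβ]
    ring
  have e1 : kernK α β j j (n - 1) 1 1 = K1 := by
    rw [kernK, Nat.sub_add_cancel hn]
    refine Finset.sum_congr rfl fun i _ => ?_
    rw [jac_deriv' α β hα hβ]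
    ring
  have eT : jT α β j n = jkap α j * jR α β j n * K0 - K1 := by
    rw [jT, hK0, hK1, Finset.mul_sum, ← Finset.sum_sub_distrib]
    refine Finset.sum_congr rfl fun i _ => ?_
    ring
  have hK1n : 0 ≤ K1 := Finset.sum_nonneg fun i _ => by
    have := jnorm_nonneg α β i
    positivity
  have hd : 0 < 1 + Ms n * K1 := by positivity
  rw [sobQ, eval_sub, eval_mul, eval_C, e0, e1, jac_deriv' α β hα hβ, jac_one α β hα hβ, sub_neg,
    div_mul_eq_mul_div, lt_div_iff₀ hd]
  have hp := jp_pos α hα n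
  rw [eT] at h
  nlinarith

lemma jA_lead_pos (α β : ℝ) (hα : -1 < α) (hβ : -1 < β) (n : ℕ) (hn : 1 ≤ n) : 0 < jA α β n n := by
  have h := (desc2_pos α β hα hβ n n n hn le_rfl).1
  rw [jA, descPochhammer_eval_eq_descFactorial, Nat.descFactorial_self]
  have hn0 : (0:ℝ) ≤ n := Nat.cast_nonneg n
  have p1 : 0 < Real.Gamma (n + α + 1) := Real.Gamma_pos_of_pos (by linarith)
  have p2 : 0 < Real.Gamma (α + n + 1) := Real.Gamma_pos_of_pos (by linarith)
  positivity

lemma sobQ_root (α β : ℝ) (hα : -1 < α) (hβ : -1 < β) (j : ℕ) 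
    (Ms : ℕ → ℝ) (n : ℕ) (hn : 1 ≤ n) (h : (sobQ α β j Ms n).eval 1 < 0) :
    ∃ x : ℝ, 1 < x ∧ (sobQ α β j Ms n).eval x = 0 := by
  have hK : (kernKPoly α β j (n - 1)).natDegree < n := by
    have : (kernKPoly α β j (n - 1)).natDegree ≤ n - 1 := by
      rw [kernKPoly]
      refine natDegree_sum_le_of_forall_le _ _ fun i hi => ?_
      have hi : i < n := by simpa [Nat.sub_add_cancel hn] using hi
      exact (natDegree_C_mul_le _ _).trans ((jac_coeff α β hα hβ i).1.trans (by omega))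
    omega
  have hc : (sobQ α β j Ms n).coeff n = jA α β n n / 2 ^ n := by
    rw [sobQ, coeff_sub, coeff_C_mul, coeff_eq_zero_of_natDegree_lt hK, mul_zero, sub_zero,
      (jac_coeff α β hα hβ n).2]
  have hpos : 0 < (sobQ α β j Ms n).coeff n := by
    rw [hc]; have := jA_lead_pos α β hα hβ n hn; positivity
  have hdle : (sobQ α β j Ms n).natDegree ≤ n := by
    rw [sobQ]
    exact (natDegree_sub_le_of_le (jac_coeff α β hα hβ n).1
      ((natDegree_C_mul_le _ _).trans hK.le)).trans (max_self n).le
  have hdeg : (sobQ α β j Ms n).natDegree = n :=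
    le_antisymm hdle (le_natDegree_of_ne_zero hpos.ne')
  have hlc : 0 < (sobQ α β j Ms n).leadingCoeff := by rw [leadingCoeff, hdeg]; exact hpos
  have ht := (sobQ α β j Ms n).tendsto_atTop_of_leadingCoeff_nonneg
    (natDegree_pos_iff_degree_pos.1 (by omega)) hlc.le
  obtain ⟨b, hb1, hb2⟩ := ((ht.eventually_gt_atTop 0).and (eventually_gt_atTop 1)).exists
  obtain ⟨x, hx, hx0⟩ := intermediate_value_Ioo hb2.le
    (sobQ α β j Ms n).continuous.continuousOn ⟨h, hb1⟩
  exact ⟨x, hx.1, hx0⟩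

theorem sobQ_largest_zero_gt_one (α β : ℝ) (hα : -1 < α) (hβ : -1 < β) (j : ℕ) (hj : 1 ≤ j)
    (γ M : ℝ) (hM : 0 < M) (Ms : ℕ → ℝ) (hMs : ∀ n, 0 ≤ Ms n)
    (hlim : Filter.Tendsto (fun n : ℕ => Ms n * (n : ℝ) ^ γ) Filter.atTop (nhds M))
    (hγ : γ < 2 * (α + 2 * j + 1)) (y : ℕ → ℝ)
    (hy : ∀ n, 1 ≤ n → IsGreatest {x : ℝ | (sobQ α β j Ms n).eval x = 0} (y n)) :
    ∃ N : ℕ, ∀ n, N ≤ n → 1 < y n := by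
  obtain ⟨c, hc, hT⟩ := jT_lower α β hα hβ j hj
  have h1 : Tendsto (fun n : ℕ => (n:ℝ) ^ (2 * (α + 2 * j + 1) - γ)) atTop atTop :=
    (tendsto_rpow_atTop (by linarith)).comp tendsto_natCast_atTop_atTop
  have h2 := hlim.pos_mul_atTop hM h1
  refine eventually_atTop.1 ?_
  filter_upwards [hT, h2.eventually_gt_atTop (1 / c), eventually_ge_atTop 1] with n hTn h2n hn
  have hn0 : (0:ℝ) < n := by exact_mod_cast hn
  rw [mul_assoc, ← Real.rpow_add hn0, show γ + (2 * (α + 2 * j + 1) - γ) = 2 * (α + 2 * j + 1) by ring,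
    div_lt_iff₀ hc] at h2n
  have h3 : 1 < Ms n * jT α β j n := by
    calc 1 < Ms n * (n:ℝ) ^ (2 * (α + 2 * j + 1)) * c := h2n
      _ = Ms n * (c * (n:ℝ) ^ (2 * (α + 2 * j + 1))) := by ring
      _ ≤ _ := mul_le_mul_of_nonneg_left hTn (hMs n)
  obtain ⟨x, hx1, hx0⟩ := sobQ_root α β hα hβ j Ms n hn
    (sobQ_one_neg α β hα hβ j Ms n hn (hMs n) h3)
  exact lt_of_lt_of_le hx1 ((hy n hn).2 hx0)
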